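/- Assume dim Γ_∞(f) = n, let γ be a face at infinity of Γ_∞(f), let ℝ^S be the minimal coordinate subspace of ℝ^n containing γ, and let σ = σ(γ) be the cone of the dual fan of Γ_∞(f) corresponding to γ. Then γ is admissible if and only if there exist finitely many integral vectors f_1,…,f_k ∈ (ℝ^n \\ ℝ_{≥0}^n) ∩ ℤ^n (k ≥ 1) with min_{v ∈ Γ_∞(f)} ⟨f_j, v⟩ < 0 for all 1 ≤ j ≤ k, such that σ = (Σ_{i ∉ S} ℝ_{≥0} e_i) + (Σ_{j=1}^k ℝ_{≥0} f_j), where e_1,…,e_n is the standard basis of ℝ^n. -/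

import Mathlib

open scoped Classical

noncomputable section

/-- Dot product on `ℝⁿ`. -/
def dotR {n : ℕ} (u v : Fin n → ℝ) : ℝ := ∑ i, u i * v i

/-- The image in `ℝⁿ` of the support of a polynomial. -/
def realSupp {n : ℕ} (f : MvPolynomial (Fin n) ℂ) : Set (Fin n → ℝ) :=
  (fun v : Fin n →₀ ℕ => fun i => (v i : ℝ)) '' {v | MvPolynomial.coeff v f ≠ 0}

/-- The Newton polyhedron at infinity `Γ_∞(f)`. -/
def NPinf {n : ℕ} (f : MvPolynomial (Fin n) ℂ) : Set (Fin n → ℝ) :=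
  convexHull ℝ ({0} ∪ realSupp f)

/-- The supporting face `γ_u` of `u` in `Γ_∞(f)`. -/
def suppFace {n : ℕ} (f : MvPolynomial (Fin n) ℂ) (u : Fin n → ℝ) : Set (Fin n → ℝ) :=
  {v ∈ NPinf f | ∀ w ∈ NPinf f, dotR u v ≤ dotR u w}

/-- A face of `Γ_∞(f)` is any set of the form `γ_u`. -/
def IsFaceOf {n : ℕ} (f : MvPolynomial (Fin n) ℂ) (γ : Set (Fin n → ℝ)) : Prop :=
  ∃ u : Fin n → ℝ, γ = suppFace f u

/-- Dimension of a subset of `ℝⁿ`: the dimension of its affine span. -/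
def setDim {n : ℕ} (s : Set (Fin n → ℝ)) : ℕ :=
  Module.finrank ℝ (affineSpan ℝ s).direction

/-- A face `γ` of `Γ_∞(f)` with `0 ∈ γ` is atypical if some facet of `Γ_∞(f)`
containing `γ` has all its nonzero inner conormal vectors outside `ℝ_{≥0}ⁿ`. -/
def IsAtypicalFace {n : ℕ} (f : MvPolynomial (Fin n) ℂ) (γ : Set (Fin n → ℝ)) : Prop :=
  IsFaceOf f γ ∧ (0 : Fin n → ℝ) ∈ γ ∧
    ∃ Γf : Set (Fin n → ℝ), IsFaceOf f Γf ∧ setDim Γf = n - 1 ∧ γ ⊆ Γf ∧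
      ∀ u : Fin n → ℝ, u ≠ 0 → suppFace f u = Γf → ¬ (∀ i, 0 ≤ u i)

/-- The cone `σ(γ)` of the dual fan of `Γ_∞(f)` corresponding to the face `γ`. -/
def sigmaCone {n : ℕ} (f : MvPolynomial (Fin n) ℂ) (γ : Set (Fin n → ℝ)) : Set (Fin n → ℝ) :=
  closure {u : Fin n → ℝ | suppFace f u = γ}

/-- The coordinate subspace `ℝ^S` of `ℝⁿ`. -/
def coordSub {n : ℕ} (S : Finset (Fin n)) : Set (Fin n → ℝ) :=
  {v | ∀ i ∉ S, v i = 0}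

/-- The `γ`-part `f_γ` of `f`. -/
def facePart {n : ℕ} (f : MvPolynomial (Fin n) ℂ) (γ : Set (Fin n → ℝ)) :
    MvPolynomial (Fin n) ℂ :=
  ∑ v ∈ f.support,
    if (fun i => (v i : ℝ)) ∈ γ then MvPolynomial.monomial v (MvPolynomial.coeff v f) else 0

/-- `f` is non-degenerate at infinity. -/
def NondegAtInfty {n : ℕ} (f : MvPolynomial (Fin n) ℂ) : Prop :=
  ∀ γ : Set (Fin n → ℝ), IsFaceOf f γ → (0 : Fin n → ℝ) ∉ γ →
    ∀ x : Fin n → ℂ, (∀ i, x i ≠ 0) → MvPolynomial.eval x (facePart f γ) = 0 →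
      ∃ i, MvPolynomial.eval x (MvPolynomial.pderiv i (facePart f γ)) ≠ 0

/-- `Δ_γ`: the convex hull of `{0} ∪ γ`. -/
def DeltaG {n : ℕ} (γ : Set (Fin n → ℝ)) : Set (Fin n → ℝ) :=
  convexHull ℝ ({0} ∪ γ)

/-- The lattice `M_γ = ℤⁿ ∩ L(Δ_γ)`. -/
def Mgamma {n : ℕ} (γ : Set (Fin n → ℝ)) : AddSubgroup (Fin n → ℤ) where
  carrier := {v | (fun i => (v i : ℝ)) ∈ Submodule.span ℝ (DeltaG γ)}
  add_mem' := by
    intro a b ha hb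
    have h : (fun i => (((a + b) : Fin n → ℤ) i : ℝ))
        = (fun i => (a i : ℝ)) + fun i => (b i : ℝ) := by
      funext i; push_cast [Pi.add_apply]; ring
    simp only [Set.mem_setOf_eq, h]
    exact Submodule.add_mem _ ha hb
  zero_mem' := by
    have h : (fun i => (((0 : Fin n → ℤ)) i : ℝ)) = (0 : Fin n → ℝ) := by
      funext i; simp
    simp only [Set.mem_setOf_eq, h]
    exact Submodule.zero_mem _
  neg_mem' := by
    intro a ha
    have h : (fun i => (((-a) : Fin n → ℤ) i : ℝ)) = -(fun i => (a i : ℝ)) := by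
      funext i; push_cast [Pi.neg_apply]; ring
    simp only [Set.mem_setOf_eq, h]
    exact Submodule.neg_mem _ ha

/-- A face at infinity is admissible if it is not contained in any atypical face. -/
def IsAdmissibleFace {n : ℕ} (f : MvPolynomial (Fin n) ℂ) (γ : Set (Fin n → ℝ)) : Prop :=
  IsFaceOf f γ ∧ (0 : Fin n → ℝ) ∉ γ ∧
    ∀ γ' : Set (Fin n → ℝ), IsAtypicalFace f γ' → ¬ γ ⊆ γ'

/-!
The dual cone `σ(γ)` is the polyhedral cone of all `u` whose face `γ_u` contains `γ`. It is salient
since `Γ_∞(f)` is full dimensional, so it is generated by its extreme rays: the inner normals of the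
facets containing `γ`, which can be chosen integral. Pairing with a point of `γ` is nonpositive on
`σ(γ)` and vanishes exactly at those `u` with `0 ∈ γ_u`, so these form a face of the cone,
generated by the normals of the facets through `0`. Hence `γ` is admissible iff every `u ∈ σ(γ)`
with `0 ∈ γ_u` lies in the first quadrant. By minimality of `S`, the vectors of `σ(γ)` in the first
quadrant are exactly the nonnegative combinations of the `e_i` with `i ∉ S`, and the remaining
extreme rays have a negative minimum.
-/

section ExtremeRays

variable {K M N : Type*} [Field K] [AddCommGroup M] [Module K M] [AddCommGroup N] [Module K N]
  {p : M →ₗ[K] N →ₗ[K] K} {T : Set M} {u w : N}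

/-- The inequalities `0 ≤ p t ·`, `t ∈ T`, that are tight at `u`. -/
def tightSet (p : M →ₗ[K] N →ₗ[K] K) (T : Set M) (u : N) : Set M := {t ∈ T | p t u = 0}

lemma tightSet_smul {c : K} (hc : c ≠ 0) (u : N) : tightSet p T (c • u) = tightSet p T u := by
  simp [tightSet, hc]

lemma sdiff_tightSet_ssubset {v : N} (h : tightSet p T u ⊂ tightSet p T v) :
    T \ tightSet p T v ⊂ T \ tightSet p T u := by
  obtain ⟨t, htv, htu⟩ := Set.exists_of_ssubset h
  exact Set.ssubset_iff_exists.2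
    ⟨Set.sdiff_subset_sdiff_right h.subset, t, ⟨htv.1, htu⟩, fun ht ↦ ht.2 htv⟩

variable [LinearOrder K] [IsStrictOrderedRing K]

/-- `u` spans an extreme ray of the polyhedral cone `PointedCone.dual p T`: the constraints that are
tight at `u` determine `u` up to scaling. -/
structure IsExtremeRay (p : M →ₗ[K] N →ₗ[K] K) (T : Set M) (u : N) : Prop where
  mem_dual : u ∈ PointedCone.dual p T
  neg_notMem_dual : -u ∉ PointedCone.dual p T
  mem_span : ∀ w, (∀ t ∈ tightSet p T u, p t w = 0) → w ∈ K ∙ u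

lemma IsExtremeRay.exists_pos_smul_eq (hu : IsExtremeRay p T u) (hw : w ∈ PointedCone.dual p T)
    (hw₀ : w ≠ 0) (htight : tightSet p T u ⊆ tightSet p T w) : ∃ c : K, 0 < c ∧ c • u = w := by
  obtain ⟨c, rfl⟩ := Submodule.mem_span_singleton.1 (hu.mem_span w fun t ht ↦ (htight ht).2)
  obtain hc | rfl | hc := lt_trichotomy c 0
  · refine absurd ((PointedCone.smul_mem_iff _ (neg_pos.2 hc)).1 ?_) hu.neg_notMem_dual
    rwa [neg_smul_neg]
  · exact absurd (zero_smul K u) hw₀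
  · exact ⟨c, hc, rfl⟩

lemma IsExtremeRay.ne_zero (hu : IsExtremeRay p T u) : u ≠ 0 := by
  rintro rfl
  exact hu.neg_notMem_dual (by simp)

lemma IsExtremeRay.smul (hu : IsExtremeRay p T u) {c : K} (hc : 0 < c) :
    IsExtremeRay p T (c • u) where
  mem_dual := PointedCone.smul_mem _ hc.le hu.mem_dual
  neg_notMem_dual := by
    rw [← smul_neg, PointedCone.smul_mem_iff _ hc]
    exact hu.neg_notMem_dual
  mem_span w hw := by
    rw [tightSet_smul hc.ne'] at hw
    rw [Submodule.span_singleton_smul_eq hc.ne'.isUnit]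
    exact hu.mem_span w hw

lemma exists_add_smul_mem_dual (hT : T.Finite) (hu : u ∈ PointedCone.dual p T)
    (htight : tightSet p T u ⊆ tightSet p T w) (hw : w ∉ PointedCone.dual p T) :
    ∃ s : K, 0 < s ∧ u + s • w ∈ PointedCone.dual p T ∧
      tightSet p T u ⊂ tightSet p T (u + s • w) := by
  -- move from `u` in the direction `w` until the first inequality becomes tight
  obtain ⟨t₁, ht₁, hneg₁⟩ : ∃ t ∈ T, p t w < 0 := by simpa [PointedCone.mem_dual] using hw
  obtain ⟨t₀, ⟨ht₀, hneg₀⟩, hmin⟩ := Set.exists_min_image {t ∈ T | p t w < 0}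
    (fun t ↦ p t u / -p t w) (hT.subset (Set.sep_subset _ _)) ⟨t₁, ht₁, hneg₁⟩
  have hpos₀ : 0 < p t₀ u := (hu ht₀).lt_of_ne fun h ↦ hneg₀.ne (htight ⟨ht₀, h.symm⟩).2
  have hs : 0 < p t₀ u / -p t₀ w := div_pos hpos₀ (neg_pos.2 hneg₀)
  refine ⟨p t₀ u / -p t₀ w, hs, fun t ht ↦ ?_, Set.ssubset_iff_exists.2 ⟨fun t ht ↦ ⟨ht.1, ?_⟩,
    t₀, ⟨ht₀, ?_⟩, fun h ↦ hpos₀.ne' h.2⟩⟩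
  · rw [map_add, map_smul, smul_eq_mul]
    obtain htw | htw := lt_or_ge (p t w) 0
    · linarith [(le_div_iff₀ (neg_pos.2 htw)).1 (hmin t ⟨ht, htw⟩)]
    · exact add_nonneg (hu ht) (mul_nonneg hs.le htw)
  · rw [map_add, map_smul, ht.2, (htight ht).2, smul_zero, add_zero]
  · rw [map_add, map_smul, smul_eq_mul]
    field [hneg₀.ne]

lemma dual_eq_hull_isExtremeRay (hT : T.Finite)
    (hsal : (PointedCone.dual p T : ConvexCone K N).Salient) :
    PointedCone.dual p T = PointedCone.hull K {u | IsExtremeRay p T u} := by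
  refine le_antisymm (fun u hu ↦ ?_) (Submodule.span_le.2 fun u hu ↦ hu.mem_dual)
  induction h : (T \ tightSet p T u).ncard using Nat.strong_induction_on generalizing u with
  | _ m ih =>
  subst h
  have ih' : ∀ v ∈ PointedCone.dual p T, tightSet p T u ⊂ tightSet p T v →
      v ∈ PointedCone.hull K {u | IsExtremeRay p T u} := fun v hv huv ↦
    ih _ (Set.ncard_lt_ncard (sdiff_tightSet_ssubset huv) hT.sdiff) v hv rfl
  by_cases hu₀ : u = 0
  · simp [hu₀]
  by_cases hext : IsExtremeRay p T u
  · exact Submodule.subset_span hext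
  obtain ⟨w, htight, hw, hwspan⟩ : ∃ w, tightSet p T u ⊆ tightSet p T w ∧
      w ∉ PointedCone.dual p T ∧ w ∉ K ∙ u := by
    obtain ⟨w, hw, hwspan⟩ : ∃ w, (∀ t ∈ tightSet p T u, p t w = 0) ∧ w ∉ K ∙ u := by
      by_contra! h
      exact hext ⟨hu, hsal u hu hu₀, h⟩
    by_cases hwT : w ∈ PointedCone.dual p T
    · refine ⟨-w, fun t ht ↦ ⟨ht.1, by simp [hw t ht]⟩, hsal w hwT ?_, by simpa using hwspan⟩
      rintro rfl
      exact hwspan (zero_mem _)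
    · exact ⟨w, fun t ht ↦ ⟨ht.1, hw t ht⟩, hwT, hwspan⟩
  obtain ⟨s, hs, hmem, htight'⟩ := exists_add_smul_mem_dual hT hu htight hw
  have hne : u + s • w ≠ 0 := fun h ↦ hwspan <| by
    have hsw : w = -s⁻¹ • u := by
      rw [eq_neg_of_add_eq_zero_left h, neg_smul_neg, inv_smul_smul₀ hs.ne']
    exact hsw ▸ Submodule.smul_mem _ _ (Submodule.mem_span_singleton_self u)
  obtain ⟨r, hr, hmem', htight''⟩ := exists_add_smul_mem_dual hT hu (w := -(u + s • w))
    (htight'.subset.trans fun t ht ↦ ⟨ht.1, by rw [map_neg, ht.2, neg_zero]⟩) (hsal _ hmem hne)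
  have hsum : u = (u + r • -(u + s • w)) + r • (u + s • w) := by module
  rw [hsum]
  exact add_mem (ih' _ hmem' htight'') (PointedCone.smul_mem _ hr.le (ih' _ hmem htight'))

lemma mem_hull_sep_of_apply_eq_zero {s : Set N} {l : N →ₗ[K] K} (hs : ∀ x ∈ s, 0 ≤ l x)
    (hu : u ∈ PointedCone.hull K s) (hlu : l u = 0) :
    u ∈ PointedCone.hull K {x ∈ s | l x = 0} := by
  suffices 0 ≤ l u ∧ (l u = 0 → u ∈ PointedCone.hull K {x ∈ s | l x = 0}) from this.2 hlu
  clear hlu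
  induction hu using Submodule.span_induction with
  | mem x hx => exact ⟨hs x hx, fun h ↦ Submodule.subset_span ⟨hx, h⟩⟩
  | zero => simp
  | add x y _ _ hx hy =>
    rw [map_add, add_eq_zero_iff_of_nonneg hx.1 hy.1]
    exact ⟨add_nonneg hx.1 hy.1, fun h ↦ add_mem (hx.2 h.1) (hy.2 h.2)⟩
  | smul c x _ hx =>
    have hcx : l (c • x) = (c : K) * l x := map_smul l (c : K) x
    refine ⟨hcx ▸ mul_nonneg c.2 hx.1, fun h ↦ ?_⟩
    obtain hc | hlx := mul_eq_zero.1 (hcx ▸ h)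
    · rw [show c = 0 from Subtype.ext hc, zero_smul]
      exact zero_mem _
    · exact Submodule.smul_mem _ c (hx.2 hlx)

end ExtremeRays

lemma exists_int_ne_zero_forall_dotProduct_eq_zero {ι G : Type*} [Fintype ι] [AddCommGroup G]
    [IsAddTorsionFree G] {u : ι → G} (hu : u ≠ 0) :
    ∃ z : ι → ℤ, z ≠ 0 ∧ ∀ b : ι → ℤ, ∑ i, b i • u i = 0 → b ⬝ᵥ z = 0 := by
  -- The subgroup generated by the entries of `u` is free, so a homomorphism to `ℤ` that does not
  -- kill all of them exists; its values on the entries form `z`.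
  obtain ⟨i, hi⟩ := Function.ne_iff.1 hu
  let H := Submodule.span ℤ (Set.range u)
  let u' : ι → H := fun j ↦ ⟨u j, Submodule.subset_span ⟨j, rfl⟩⟩
  have : Module.Finite ℤ H := Module.Finite.span_of_finite ℤ (Set.finite_range u)
  have : Module.Free ℤ H := inferInstance
  obtain ⟨φ, hφ⟩ : ∃ φ : Module.Dual ℤ H, φ (u' i) ≠ 0 := by
    by_contra! h
    exact hi (congrArg Subtype.val ((Module.forall_dual_apply_eq_zero_iff ℤ (u' i)).1 h))
  refine ⟨fun j ↦ φ (u' j), fun h ↦ hφ (congrFun h i), fun b hb ↦ ?_⟩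
  have : ∑ j, b j • u' j = 0 := Subtype.ext (by simpa [u'] using hb)
  simpa [dotProduct] using congrArg φ this

section Integral

variable {ι K : Type*} [Fintype ι] [Field K] [LinearOrder K] [IsStrictOrderedRing K]
  {T : Set (ι → K)}

lemma IsExtremeRay.exists_pos_smul_eq_intCast {u : ι → K}
    (hT : T ⊆ Set.range fun z : ι → ℤ ↦ ((↑) ∘ z : ι → K))
    (hu : IsExtremeRay (dotProductBilin K K) T u) :
    ∃ c : K, 0 < c ∧ ∃ z : ι → ℤ, c • u = (↑) ∘ z := by
  obtain ⟨z, hz₀, hz⟩ := exists_int_ne_zero_forall_dotProduct_eq_zero hu.ne_zero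
  obtain ⟨c, hc⟩ := Submodule.mem_span_singleton.1 <| hu.mem_span (Int.cast ∘ z) fun t ht ↦ by
    obtain ⟨b, rfl⟩ := hT ht.1
    have hb : ∑ i, b i • u i = 0 := by simpa [dotProductBilin, dotProduct] using ht.2
    simpa [dotProductBilin, dotProduct] using congrArg (Int.cast : ℤ → K) (hz b hb)
  obtain hneg | rfl | hpos := lt_trichotomy c 0
  · refine ⟨-c, neg_pos.2 hneg, -z, ?_⟩
    rw [neg_smul, hc]
    ext i
    simp
  · refine absurd ?_ hz₀
    ext i
    simpa using (congrFun hc i).symm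
  · exact ⟨c, hpos, z, hc⟩

lemma exists_finite_int_isExtremeRay (hT : T.Finite)
    (hTint : T ⊆ Set.range fun z : ι → ℤ ↦ ((↑) ∘ z : ι → K)) :
    ∃ Z : Set (ι → ℤ), Z.Finite ∧ (∀ z ∈ Z, IsExtremeRay (dotProductBilin K K) T ((↑) ∘ z)) ∧
      ∀ u, IsExtremeRay (dotProductBilin K K) T u →
        ∃ z ∈ Z, ∃ c : K, 0 < c ∧ c • ((↑) ∘ z) = u := by
  -- choose one integral representative for each set of tight constraints
  obtain ⟨Z, hZsub, hZ⟩ := Set.exists_subset_bijOn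
    {z : ι → ℤ | IsExtremeRay (dotProductBilin K K) T ((↑) ∘ z)}
    fun z ↦ tightSet (dotProductBilin K K) T ((↑) ∘ z)
  have hfin : Z.Finite := .of_finite_image
    (hT.finite_subsets.subset (by rintro _ ⟨z, -, rfl⟩; exact Set.sep_subset _ _)) hZ.injOn
  refine ⟨Z, hfin, fun z hz ↦ hZsub hz, fun u hu ↦ ?_⟩
  obtain ⟨c, hc, z, hz⟩ := hu.exists_pos_smul_eq_intCast hTint
  obtain ⟨z', hz', htight⟩ := hZ.surjOn ⟨z, hz.subst (motive := IsExtremeRay _ T) (hu.smul hc), rfl⟩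
  refine ⟨z', hz', (hZsub hz').exists_pos_smul_eq hu.mem_dual hu.ne_zero ?_⟩
  rw [← tightSet_smul hc.ne' u, hz]
  exact htight.subset

end Integral

section Convexity

lemma subset_convexHull_inter_of_isExtreme {𝕜 E : Type*} [Field 𝕜] [LinearOrder 𝕜]
    [IsStrictOrderedRing 𝕜] [AddCommGroup E] [Module 𝕜 E] {s B : Set E}
    (hB : IsExtreme 𝕜 (convexHull 𝕜 s) B) : B ⊆ convexHull 𝕜 (s ∩ B) := by
  suffices convexHull 𝕜 s ⊆ {x ∈ convexHull 𝕜 s | x ∈ B → x ∈ convexHull 𝕜 (s ∩ B)} from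
    fun x hx ↦ (this (hB.subset hx)).2 hx
  refine convexHull_min (fun x hx ↦ ⟨subset_convexHull 𝕜 s hx,
    fun hxB ↦ subset_convexHull 𝕜 _ ⟨hx, hxB⟩⟩) (convex_iff_openSegment_subset.2 ?_)
  refine fun x hx y hy z hz ↦ ⟨(convex_convexHull 𝕜 s).openSegment_subset hx.1 hy.1 hz,
    fun hzB ↦ (convex_convexHull 𝕜 _).openSegment_subset (hx.2 ?_) (hy.2 ?_) hz⟩
  · exact hB.left_mem_of_mem_openSegment hx.1 hy.1 hzB hz
  · exact hB.right_mem_of_mem_openSegment hx.1 hy.1 hzB hz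

variable {ι K : Type*} [Fintype ι] [Field K] {s : Set (ι → K)} {w : ι → K}

/-- The space of all vectors `w` for which `w ⬝ᵥ ·` is constant on `s`. -/
def conormalSpace (s : Set (ι → K)) : Submodule K (ι → K) :=
  (vectorSpan K s).dualAnnihilator.map (dotProductEquiv K ι).symm.toLinearMap

lemma mem_conormalSpace : w ∈ conormalSpace s ↔ ∀ x ∈ s, ∀ y ∈ s, w ⬝ᵥ x = w ⬝ᵥ y := by
  have h : vectorSpan K s ≤ (dotProductEquiv K ι w).ker ↔ ∀ x ∈ s, ∀ y ∈ s, w ⬝ᵥ x = w ⬝ᵥ y := by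
    simp only [vectorSpan_def, Submodule.span_le, Set.vsub_subset_iff, vsub_eq_sub,
      SetLike.mem_coe, LinearMap.mem_ker, map_sub, dotProductEquiv_apply_apply, sub_eq_zero]
  rw [← h, conormalSpace, Submodule.mem_map_equiv, Submodule.mem_dualAnnihilator]
  rfl

lemma finrank_vectorSpan_add_finrank_conormalSpace (s : Set (ι → K)) :
    Module.finrank K (vectorSpan K s) + Module.finrank K (conormalSpace s) = Fintype.card ι := by
  rw [conormalSpace, LinearEquiv.finrank_map_eq,
    Subspace.finrank_add_finrank_dualAnnihilator_eq, Module.finrank_fintype_fun_eq_card]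

lemma setDim_add_finrank_conormalSpace {n : ℕ} (s : Set (Fin n → ℝ)) :
    setDim s + Module.finrank ℝ (conormalSpace s) = n := by
  rw [setDim, direction_affineSpan, finrank_vectorSpan_add_finrank_conormalSpace, Fintype.card_fin]

end Convexity

section NewtonPolyhedron

variable {n : ℕ} {f : MvPolynomial (Fin n) ℂ} {γ : Set (Fin n → ℝ)} {u v w x y : Fin n → ℝ}

/-- The finite set `{0} ∪ supp f`, whose convex hull is `Γ_∞(f)`. -/
def expPoints (f : MvPolynomial (Fin n) ℂ) : Set (Fin n → ℝ) := {0} ∪ realSupp f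

lemma expPoints_subset_NPinf : expPoints f ⊆ NPinf f := subset_convexHull ℝ _

lemma zero_mem_NPinf : 0 ∈ NPinf f := expPoints_subset_NPinf (.inl rfl)

lemma finite_expPoints : (expPoints f).Finite :=
  (Set.finite_singleton 0).union
    ((f.support.finite_toSet.subset fun _ ↦ MvPolynomial.mem_support_iff.2).image _)

lemma exists_natCast_eq_of_mem_expPoints (hx : x ∈ expPoints f) :
    ∃ a : Fin n → ℕ, (↑) ∘ a = x := by
  obtain rfl | ⟨a, -, rfl⟩ := hx
  · exact ⟨0, by ext; simp⟩
  · exact ⟨a, rfl⟩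

lemma nonneg_of_mem_NPinf (hx : x ∈ NPinf f) : 0 ≤ x := by
  refine convexHull_min (t := Set.Ici 0) (fun y hy ↦ ?_) (convex_Ici 0) hx
  obtain ⟨a, rfl⟩ := exists_natCast_eq_of_mem_expPoints hy
  exact fun i ↦ Nat.cast_nonneg (a i)

lemma dotR_eq_dotProduct (u x : Fin n → ℝ) : dotR u x = u ⬝ᵥ x := rfl

lemma mem_suppFace : x ∈ suppFace f u ↔ x ∈ NPinf f ∧ ∀ y ∈ NPinf f, u ⬝ᵥ x ≤ u ⬝ᵥ y := .rfl

lemma mem_suppFace_iff_forall_expPoints :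
    x ∈ suppFace f u ↔ x ∈ NPinf f ∧ ∀ a ∈ expPoints f, u ⬝ᵥ x ≤ u ⬝ᵥ a := by
  refine mem_suppFace.trans (and_congr_right fun _ ↦ ⟨fun h a ha ↦ h a (expPoints_subset_NPinf ha),
    fun h y hy ↦ ?_⟩)
  exact convexHull_min h (convex_halfSpace_ge (dotProductBilin ℝ ℝ u).isLinear _) hy

lemma mem_suppFace_iff_of_mem (hx : x ∈ suppFace f u) :
    y ∈ suppFace f u ↔ y ∈ NPinf f ∧ u ⬝ᵥ y = u ⬝ᵥ x := by
  refine ⟨fun hy ↦ ⟨hy.1, (hy.2 x hx.1).antisymm (hx.2 y hy.1)⟩, fun hy ↦ ⟨hy.1, fun z hz ↦ ?_⟩⟩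
  rw [dotR_eq_dotProduct, hy.2]
  exact hx.2 z hz

lemma suppFace_nonempty (f : MvPolynomial (Fin n) ℂ) (u : Fin n → ℝ) : (suppFace f u).Nonempty := by
  obtain ⟨a, ha, hmin⟩ := Set.exists_min_image (expPoints f) (u ⬝ᵥ ·) finite_expPoints ⟨0, .inl rfl⟩
  exact ⟨a, mem_suppFace_iff_forall_expPoints.2 ⟨expPoints_subset_NPinf ha, hmin⟩⟩

lemma suppFace_smul {c : ℝ} (hc : 0 < c) (u : Fin n → ℝ) : suppFace f (c • u) = suppFace f u := by
  ext x
  simp only [mem_suppFace, smul_dotProduct, smul_eq_mul, mul_le_mul_iff_right₀ hc]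

lemma suppFace_add (h : (suppFace f u ∩ suppFace f v).Nonempty) :
    suppFace f (u + v) = suppFace f u ∩ suppFace f v := by
  obtain ⟨x, hxu, hxv⟩ := h
  have hle : ∀ y ∈ NPinf f, u ⬝ᵥ x ≤ u ⬝ᵥ y ∧ v ⬝ᵥ x ≤ v ⬝ᵥ y := fun y hy ↦
    ⟨hxu.2 y hy, hxv.2 y hy⟩
  have hx : x ∈ suppFace f (u + v) := mem_suppFace.2 ⟨hxu.1, fun y hy ↦ by
    simpa only [add_dotProduct] using add_le_add (hle y hy).1 (hle y hy).2⟩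
  ext y
  rw [Set.mem_inter_iff, mem_suppFace_iff_of_mem hx, mem_suppFace_iff_of_mem hxu,
    mem_suppFace_iff_of_mem hxv, ← and_and_left, add_dotProduct, add_dotProduct]
  refine and_congr_right fun hy ↦ ?_
  rw [eq_comm, add_eq_add_iff_eq_and_eq (hle y hy).1 (hle y hy).2, eq_comm, @eq_comm _ (v ⬝ᵥ x)]

lemma isExposed_suppFace (f : MvPolynomial (Fin n) ℂ) (u : Fin n → ℝ) :
    IsExposed ℝ (NPinf f) (suppFace f u) := fun _ ↦
  ⟨(-dotProductEquiv ℝ (Fin n) u).toContinuousLinearMap, by ext x; simp [mem_suppFace]⟩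

lemma zero_notMem_suppFace_iff : 0 ∉ suppFace f u ↔ ∃ x ∈ NPinf f, dotR u x < 0 := by
  simp [mem_suppFace, zero_mem_NPinf, dotR_eq_dotProduct]

lemma zero_mem_suppFace_of_nonneg (hu : 0 ≤ u) : 0 ∈ suppFace f u := by
  by_contra h
  obtain ⟨x, hx, hneg⟩ := zero_notMem_suppFace_iff.1 h
  exact hneg.not_ge (dotProduct_nonneg_of_nonneg hu (nonneg_of_mem_NPinf hx))

lemma mem_conormalSpace_suppFace : u ∈ conormalSpace (suppFace f u) :=
  mem_conormalSpace.2 fun _ hx _ hy ↦ ((mem_suppFace_iff_of_mem hy).1 hx).2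

/-- The differences `a - b` of points of `expPoints f` with `b ∈ γ`; nonnegativity of `u` on all of
them says that `⟨u, ·⟩` attains its minimum over `Γ_∞(f)` at every exponent in `γ`. -/
def faceDirs (f : MvPolynomial (Fin n) ℂ) (γ : Set (Fin n → ℝ)) : Set (Fin n → ℝ) :=
  Set.image2 (· - ·) (expPoints f) (expPoints f ∩ γ)

/-- The inner normal cone of a face `γ`, presented by finitely many inequalities. -/
def normalCone (f : MvPolynomial (Fin n) ℂ) (γ : Set (Fin n → ℝ)) : PointedCone ℝ (Fin n → ℝ) :=
  PointedCone.dual (dotProductBilin ℝ ℝ) (faceDirs f γ)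

lemma finite_faceDirs : (faceDirs f γ).Finite :=
  finite_expPoints.image2 _ (finite_expPoints.subset Set.inter_subset_left)

lemma faceDirs_subset_range_intCast :
    faceDirs f γ ⊆ Set.range fun z : Fin n → ℤ ↦ ((↑) ∘ z : Fin n → ℝ) := by
  rintro _ ⟨_, ha, _, hb, rfl⟩
  obtain ⟨a, rfl⟩ := exists_natCast_eq_of_mem_expPoints ha
  obtain ⟨b, rfl⟩ := exists_natCast_eq_of_mem_expPoints hb.1
  exact ⟨fun i ↦ a i - b i, by ext; simp⟩

lemma mem_normalCone_iff_forall_expPoints :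
    u ∈ normalCone f γ ↔ ∀ a ∈ expPoints f, ∀ b ∈ expPoints f ∩ γ, u ⬝ᵥ b ≤ u ⬝ᵥ a := by
  simp only [normalCone, faceDirs, PointedCone.mem_dual, Set.forall_mem_image2,
    dotProductBilin_apply_apply, sub_dotProduct, sub_nonneg, dotProduct_comm u]

lemma mem_normalCone_suppFace : u ∈ normalCone f (suppFace f v) ↔ suppFace f v ⊆ suppFace f u := by
  rw [mem_normalCone_iff_forall_expPoints]
  refine ⟨fun h ↦ ?_, fun h a ha b hb ↦ (h hb.2).2 a (expPoints_subset_NPinf ha)⟩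
  refine (subset_convexHull_inter_of_isExtreme (isExposed_suppFace f v).isExtreme).trans
    (convexHull_min (fun b hb ↦ ?_) ((isExposed_suppFace f u).convex (convex_convexHull ℝ _)))
  exact mem_suppFace_iff_forall_expPoints.2 ⟨expPoints_subset_NPinf hb.1, fun a ha ↦ h a ha b hb⟩

lemma self_mem_normalCone_suppFace : v ∈ normalCone f (suppFace f v) :=
  mem_normalCone_suppFace.2 subset_rfl

lemma sigmaCone_suppFace (f : MvPolynomial (Fin n) ℂ) (v : Fin n → ℝ) :
    sigmaCone f (suppFace f v) = normalCone f (suppFace f v) := by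
  refine (closure_minimal (fun u hu ↦ mem_normalCone_suppFace.2 hu.ge)
    (PointedCone.isClosed_dual fun t ↦
      (dotProductBilin ℝ ℝ t).continuous_of_finiteDimensional)).antisymm fun u hu ↦ ?_
  have hlim : Filter.Tendsto (fun ε : ℝ ↦ u + ε • v) (nhdsWithin 0 (Set.Ioi 0)) (nhds u) := by
    have hcont : Continuous fun ε : ℝ ↦ u + ε • v := by fun_prop
    simpa using (hcont.tendsto 0).mono_left nhdsWithin_le_nhds
  refine mem_closure_of_tendsto hlim (eventually_mem_nhdsWithin.mono fun ε hε ↦ ?_)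
  have hsub := mem_normalCone_suppFace.1 hu
  have hne := (suppFace_nonempty f v).mono (Set.subset_inter hsub (suppFace_smul hε v).ge)
  exact (suppFace_add hne).trans (by rw [suppFace_smul hε, Set.inter_eq_right.2 hsub])

lemma tightSet_subset_of_mem_conormalSpace (hγ : γ ⊆ suppFace f u)
    (hw : w ∈ conormalSpace (suppFace f u)) :
    tightSet (dotProductBilin ℝ ℝ) (faceDirs f γ) u ⊆
      tightSet (dotProductBilin ℝ ℝ) (faceDirs f γ) w := by
  rintro _ ⟨⟨a, ha, b, hb, rfl⟩, hu⟩
  have hua : u ⬝ᵥ a = u ⬝ᵥ b := by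
    rwa [dotProductBilin_apply_apply, sub_dotProduct, sub_eq_zero, dotProduct_comm,
      dotProduct_comm b] at hu
  refine ⟨⟨a, ha, b, hb, rfl⟩, ?_⟩
  rw [dotProductBilin_apply_apply, sub_dotProduct, sub_eq_zero, dotProduct_comm, dotProduct_comm b]
  exact mem_conormalSpace.1 hw a
    ((mem_suppFace_iff_of_mem (hγ hb.2)).2 ⟨expPoints_subset_NPinf ha, hua⟩) b (hγ hb.2)

lemma salient_normalCone_suppFace (hdim : setDim (NPinf f) = n) :
    (normalCone f (suppFace f v) : ConvexCone ℝ (Fin n → ℝ)).Salient := by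
  intro u hu hu₀ hneg
  have hfin := setDim_add_finrank_conormalSpace (NPinf f)
  have hbot : conormalSpace (NPinf f) = ⊥ := Submodule.finrank_eq_zero.1 (by omega)
  obtain ⟨x, hx⟩ := suppFace_nonempty f v
  have hconst : ∀ y ∈ NPinf f, u ⬝ᵥ y = u ⬝ᵥ x := fun y hy ↦ by
    have hle := (mem_suppFace.1 (mem_normalCone_suppFace.1 hneg hx)).2 y hy
    rw [neg_dotProduct, neg_dotProduct, neg_le_neg_iff] at hle
    exact hle.antisymm ((mem_normalCone_suppFace.1 hu hx).2 y hy)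
  refine hu₀ ((Submodule.mem_bot ℝ).1 (hbot ▸ mem_conormalSpace.2 fun y hy z hz ↦ ?_))
  rw [hconst y hy, hconst z hz]

lemma IsExtremeRay.setDim_suppFace
    (hu : IsExtremeRay (dotProductBilin ℝ ℝ) (faceDirs f (suppFace f v)) u) :
    setDim (suppFace f u) = n - 1 := by
  have hspan : conormalSpace (suppFace f u) = ℝ ∙ u :=
    le_antisymm
      (fun w hw ↦ hu.mem_span w fun t ht ↦
        (tightSet_subset_of_mem_conormalSpace (mem_normalCone_suppFace.1 hu.mem_dual) hw ht).2)
      ((Submodule.span_singleton_le_iff_mem _ _).2 mem_conormalSpace_suppFace)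
  have hfin := setDim_add_finrank_conormalSpace (suppFace f u)
  rw [hspan, finrank_span_singleton hu.ne_zero] at hfin
  omega

lemma IsExtremeRay.exists_pos_smul_eq_of_suppFace_eq
    (hu : IsExtremeRay (dotProductBilin ℝ ℝ) (faceDirs f (suppFace f v)) u) (hw₀ : w ≠ 0)
    (hw : suppFace f w = suppFace f u) : ∃ c : ℝ, 0 < c ∧ c • u = w := by
  have hsub := mem_normalCone_suppFace.1 hu.mem_dual
  exact hu.exists_pos_smul_eq (mem_normalCone_suppFace.2 (hw ▸ hsub)) hw₀
    (tightSet_subset_of_mem_conormalSpace hsub (hw ▸ mem_conormalSpace_suppFace))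

lemma isAtypicalFace_suppFace_of_isExtremeRay
    (hu : IsExtremeRay (dotProductBilin ℝ ℝ) (faceDirs f (suppFace f v)) u)
    (h0 : 0 ∈ suppFace f u) (hneg : ¬ 0 ≤ u) : IsAtypicalFace f (suppFace f u) := by
  refine ⟨⟨u, rfl⟩, h0, suppFace f u, ⟨u, rfl⟩, hu.setDim_suppFace, subset_rfl, ?_⟩
  intro w hw₀ hw hpos
  obtain ⟨c, hc, rfl⟩ := hu.exists_pos_smul_eq_of_suppFace_eq hw₀ hw
  exact hneg ((smul_nonneg_iff_nonneg_of_pos_left hc).1 hpos)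

lemma ne_zero_of_setDim_suppFace (hdim : setDim (NPinf f) = n) (hv : 0 ∉ suppFace f v)
    (hu : setDim (suppFace f u) = n - 1) : u ≠ 0 := by
  rintro rfl
  have h : suppFace f 0 = NPinf f := by ext; simp [mem_suppFace]
  obtain rfl : n = 0 := by rw [h, hdim] at hu; omega
  exact hv (zero_mem_suppFace_of_nonneg fun i ↦ i.elim0)

lemma nonneg_of_mem_hull_of_zero_mem_suppFace {s : Set (Fin n → ℝ)}
    (hs : s ⊆ normalCone f (suppFace f v)) (hpos : ∀ y ∈ s, 0 ∈ suppFace f y → 0 ≤ y)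
    (hu : u ∈ PointedCone.hull ℝ s) (h0 : 0 ∈ suppFace f u) : 0 ≤ u := by
  obtain ⟨x, hx⟩ := suppFace_nonempty f v
  have hnonpos : ∀ y ∈ normalCone f (suppFace f v), x ⬝ᵥ y ≤ 0 := fun y hy ↦ by
    have hle := (mem_suppFace.1 (mem_normalCone_suppFace.1 hy hx)).2 0 zero_mem_NPinf
    rwa [dotProduct_zero, dotProduct_comm] at hle
  have hzero : ∀ y ∈ normalCone f (suppFace f v), 0 ∈ suppFace f y ↔ x ⬝ᵥ y = 0 := fun y hy ↦ by
    rw [mem_suppFace_iff_of_mem (mem_normalCone_suppFace.1 hy hx), dotProduct_zero,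
      dotProduct_comm x, and_iff_right zero_mem_NPinf, eq_comm]
  have hmem := mem_hull_sep_of_apply_eq_zero (l := -dotProductBilin ℝ ℝ x)
    (fun y hy ↦ neg_nonneg.2 (hnonpos y (hs hy))) hu
    (neg_eq_zero.2 ((hzero u (Submodule.span_le.2 hs hu)).1 h0))
  refine (PointedCone.mem_positive ℝ _).1 (Submodule.span_le.2 (fun y hy ↦ ?_) hmem)
  exact hpos y hy.1 ((hzero y (hs hy.1)).2 (neg_eq_zero.1 hy.2))

lemma normalCone_suppFace_eq_hull (hdim : setDim (NPinf f) = n) :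
    normalCone f (suppFace f v) = PointedCone.hull ℝ
      {u | IsExtremeRay (dotProductBilin ℝ ℝ) (faceDirs f (suppFace f v)) u} :=
  dual_eq_hull_isExtremeRay finite_faceDirs (salient_normalCone_suppFace hdim)

lemma isAdmissibleFace_suppFace_iff (hdim : setDim (NPinf f) = n) (h0 : 0 ∉ suppFace f v) :
    IsAdmissibleFace f (suppFace f v) ↔
      ∀ u ∈ normalCone f (suppFace f v), 0 ∈ suppFace f u → 0 ≤ u := by
  refine ⟨fun ⟨_, _, hadm⟩ u hu hu0 ↦ ?_, fun h ↦ ⟨⟨v, rfl⟩, h0, ?_⟩⟩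
  · rw [normalCone_suppFace_eq_hull hdim] at hu
    refine nonneg_of_mem_hull_of_zero_mem_suppFace (fun y hy ↦ hy.mem_dual) ?_ hu hu0
    intro y hy hy0
    by_contra hneg
    exact hadm _ (isAtypicalFace_suppFace_of_isExtremeRay hy hy0 hneg)
      (mem_normalCone_suppFace.1 hy.mem_dual)
  · rintro γ ⟨-, h0γ, _, ⟨w, rfl⟩, hfacet, hγ, hnormal⟩ hvγ
    exact hnormal w (ne_zero_of_setDim_suppFace hdim h0 hfacet) rfl
      (h w (mem_normalCone_suppFace.2 (hvγ.trans hγ)) (hγ h0γ))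

/-- The cone generated by the basis vectors `e i` with `i ∉ S`. -/
def orthantFace (S : Finset (Fin n)) : PointedCone ℝ (Fin n → ℝ) where
  carrier := {c | 0 ≤ c ∧ ∀ i ∈ S, c i = 0}
  add_mem' ha hb := ⟨add_nonneg ha.1 hb.1, fun i hi ↦ by simp [ha.2 i hi, hb.2 i hi]⟩
  zero_mem' := ⟨le_rfl, fun _ _ ↦ rfl⟩
  smul_mem' c x hx := ⟨smul_nonneg c.2 hx.1, fun i hi ↦ by simp [hx.2 i hi]⟩

variable {S : Finset (Fin n)}

lemma orthantFace_le_normalCone (hS : suppFace f v ⊆ coordSub S) :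
    orthantFace S ≤ normalCone f (suppFace f v) := fun c ⟨hc, hcS⟩ ↦ by
  refine mem_normalCone_suppFace.2 fun x hx ↦ ⟨hx.1, fun y hy ↦ ?_⟩
  have hcx : c ⬝ᵥ x = 0 := Finset.sum_eq_zero fun i _ ↦ by
    by_cases hi : i ∈ S
    · rw [hcS i hi, zero_mul]
    · rw [hS hx i hi, mul_zero]
  exact hcx.trans_le (dotProduct_nonneg_of_nonneg hc (nonneg_of_mem_NPinf hy))

lemma mem_orthantFace_of_nonneg (hS : suppFace f v ⊆ coordSub S)
    (hmin : ∀ S' : Finset (Fin n), suppFace f v ⊆ coordSub S' → S ⊆ S')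
    (hu : u ∈ normalCone f (suppFace f v)) (hpos : 0 ≤ u) : u ∈ orthantFace S := by
  refine ⟨hpos, fun i hi ↦ ?_⟩
  by_contra hui
  refine Finset.notMem_erase i S (hmin (S.erase i) (fun x hx j hj ↦ ?_) hi)
  obtain rfl | hji := eq_or_ne j i
  · have hx0 : 0 ≤ x := nonneg_of_mem_NPinf hx.1
    have hux : u ⬝ᵥ x = 0 := by
      refine le_antisymm ?_ (dotProduct_nonneg_of_nonneg hpos hx0)
      simpa using (mem_suppFace.1 (mem_normalCone_suppFace.1 hu hx)).2 0 zero_mem_NPinf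
    have hterm := (Finset.sum_eq_zero_iff_of_nonneg fun k _ ↦ mul_nonneg (hpos k) (hx0 k)).1 hux j
      (Finset.mem_univ j)
    exact (mul_eq_zero.1 hterm).resolve_left hui
  · exact hS hx j fun hjS ↦ hj (Finset.mem_erase.2 ⟨hji, hjS⟩)

lemma exists_finite_int_normalCone_eq (hdim : setDim (NPinf f) = n)
    (hS : suppFace f v ⊆ coordSub S)
    (hmin : ∀ S' : Finset (Fin n), suppFace f v ⊆ coordSub S' → S ⊆ S')
    (hpos : ∀ u ∈ normalCone f (suppFace f v), 0 ∈ suppFace f u → 0 ≤ u) :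
    ∃ Z : Set (Fin n → ℤ), Z.Finite ∧ (∀ z ∈ Z, 0 ∉ suppFace f ((↑) ∘ z)) ∧
      normalCone f (suppFace f v) =
        orthantFace S ⊔ PointedCone.hull ℝ ((fun z : Fin n → ℤ ↦ ((↑) ∘ z : Fin n → ℝ)) '' Z) := by
  obtain ⟨Z, hfin, hZ, hrep⟩ := exists_finite_int_isExtremeRay finite_faceDirs
    (faceDirs_subset_range_intCast (f := f) (γ := suppFace f v))
  refine ⟨{z ∈ Z | 0 ∉ suppFace f ((↑) ∘ z)}, hfin.subset (Set.sep_subset _ _),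
    fun z hz ↦ hz.2, le_antisymm ?_ (sup_le (orthantFace_le_normalCone hS) ?_)⟩
  · rw [normalCone_suppFace_eq_hull hdim, PointedCone.hull, Submodule.span_le]
    intro u hu
    obtain ⟨z, hz, c, hc, rfl⟩ := hrep u hu
    refine PointedCone.smul_mem _ hc.le ?_
    by_cases h0z : 0 ∈ suppFace f ((↑) ∘ z)
    · exact Submodule.mem_sup_left (mem_orthantFace_of_nonneg hS hmin (hZ z hz).mem_dual
        (hpos _ (hZ z hz).mem_dual h0z))
    · exact Submodule.mem_sup_right (Submodule.subset_span ⟨z, ⟨hz, h0z⟩, rfl⟩)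
  · rw [PointedCone.hull, Submodule.span_le]
    rintro _ ⟨z, hz, rfl⟩
    exact (hZ z hz.1).mem_dual

lemma exists_int_family_normalCone_eq (hdim : setDim (NPinf f) = n) (h0 : 0 ∉ suppFace f v)
    (hS : suppFace f v ⊆ coordSub S)
    (hmin : ∀ S' : Finset (Fin n), suppFace f v ⊆ coordSub S' → S ⊆ S')
    (hpos : ∀ u ∈ normalCone f (suppFace f v), 0 ∈ suppFace f u → 0 ≤ u) :
    ∃ k : ℕ, 1 ≤ k ∧ ∃ z : Fin k → Fin n → ℤ, (∀ j, 0 ∉ suppFace f ((↑) ∘ z j)) ∧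
      normalCone f (suppFace f v) =
        orthantFace S ⊔ PointedCone.hull ℝ (Set.range fun j ↦ ((↑) ∘ z j : Fin n → ℝ)) := by
  obtain ⟨Z, hZ, hZ0, hgen⟩ := exists_finite_int_normalCone_eq hdim hS hmin hpos
  obtain ⟨k, z, -, rfl⟩ := hZ.fin_param
  rw [← Set.range_comp] at hgen
  refine ⟨k, Nat.one_le_iff_ne_zero.2 ?_, z, fun j ↦ hZ0 _ ⟨j, rfl⟩, hgen⟩
  rintro rfl
  have hv : v ∈ orthantFace S := by
    simpa [hgen, Set.range_eq_empty] using self_mem_normalCone_suppFace (f := f) (v := v)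
  exact h0 (zero_mem_suppFace_of_nonneg hv.1)

lemma nonneg_of_normalCone_eq {A : Set (Fin n → ℝ)} (hA : ∀ a ∈ A, 0 ∉ suppFace f a)
    (hgen : normalCone f (suppFace f v) = orthantFace S ⊔ PointedCone.hull ℝ A)
    (hu : u ∈ normalCone f (suppFace f v)) (h0 : 0 ∈ suppFace f u) : 0 ≤ u := by
  have hhull : normalCone f (suppFace f v) = PointedCone.hull ℝ (orthantFace S ∪ A) := by
    rw [hgen, PointedCone.hull, PointedCone.hull, Submodule.span_union, Submodule.span_eq]
  have hsub : (orthantFace S : Set (Fin n → ℝ)) ∪ A ⊆ normalCone f (suppFace f v) := by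
    rw [hhull]
    exact Submodule.subset_span
  rw [hhull] at hu
  refine nonneg_of_mem_hull_of_zero_mem_suppFace hsub ?_ hu h0
  rintro y (hy | hy) hy0
  exacts [hy.1, absurd hy0 (hA y hy)]

lemma coe_orthantFace_sup_hull_range {κ : Type*} [Fintype κ] (S : Finset (Fin n))
    (v : κ → Fin n → ℝ) :
    (orthantFace S ⊔ PointedCone.hull ℝ (Set.range v) : PointedCone ℝ (Fin n → ℝ)) =
      {x : Fin n → ℝ | ∃ (c : Fin n → ℝ) (d : κ → ℝ), (∀ i, 0 ≤ c i) ∧ (∀ i ∈ S, c i = 0) ∧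
        (∀ j, 0 ≤ d j) ∧ x = (∑ i, c i • (Pi.single i (1 : ℝ) : Fin n → ℝ)) + ∑ j, d j • v j} := by
  ext x
  simp only [← pi_eq_sum_univ', SetLike.mem_coe, Submodule.mem_sup,
    Submodule.mem_span_range_iff_exists_fun]
  constructor
  · rintro ⟨c, ⟨hc, hcS⟩, _, ⟨d, rfl⟩, rfl⟩
    exact ⟨c, fun j ↦ d j, hc, hcS, fun j ↦ (d j).2, rfl⟩
  · rintro ⟨c, d, hc, hcS, hd, rfl⟩
    exact ⟨c, ⟨hc, hcS⟩, _, ⟨fun j ↦ ⟨d j, hd j⟩, rfl⟩, rfl⟩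

end NewtonPolyhedron

/-- A face at infinity `γ` of `Γ_∞(f)` is admissible iff
`σ(γ) = (Σ_{i ∉ S} ℝ_{≥0} e_i) + (Σ_{j=1}^k ℝ_{≥0} f_j)` for finitely many integral vectors
`f_1, …, f_k ∉ ℝ_{≥0}ⁿ` on which the minimum of `⟨·,·⟩` over `Γ_∞(f)` is negative. -/
theorem admissible_iff_sigmaCone_generated {n : ℕ} (f : MvPolynomial (Fin n) ℂ)
    (hdim : setDim (NPinf f) = n) (γ : Set (Fin n → ℝ))
    (hγ : IsFaceOf f γ) (h0 : (0 : Fin n → ℝ) ∉ γ)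
    (S : Finset (Fin n)) (hS : γ ⊆ coordSub S)
    (hmin : ∀ S' : Finset (Fin n), γ ⊆ coordSub S' → S ⊆ S') :
    IsAdmissibleFace f γ ↔
      ∃ k : ℕ, 1 ≤ k ∧ ∃ fv : Fin k → (Fin n → ℤ),
        (∀ j, ¬ (∀ i, 0 ≤ fv j i)) ∧
        (∀ j, ∃ v ∈ NPinf f, dotR (fun i => (fv j i : ℝ)) v < 0) ∧
        sigmaCone f γ = {x : Fin n → ℝ | ∃ (c : Fin n → ℝ) (d : Fin k → ℝ),
          (∀ i, 0 ≤ c i) ∧ (∀ i ∈ S, c i = 0) ∧ (∀ j, 0 ≤ d j) ∧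
          x = (∑ i, c i • (Pi.single i (1 : ℝ) : Fin n → ℝ)) + ∑ j, d j • (fun i => (fv j i : ℝ) : Fin n → ℝ)} := by
  obtain ⟨v, rfl⟩ := hγ
  simp only [← coe_orthantFace_sup_hull_range, ← zero_notMem_suppFace_iff, sigmaCone_suppFace,
    SetLike.coe_set_eq]
  rw [isAdmissibleFace_suppFace_iff hdim h0]
  constructor
  · intro hpos
    obtain ⟨k, hk, z, hz, hgen⟩ := exists_int_family_normalCone_eq hdim h0 hS hmin hpos
    refine ⟨k, hk, z, fun j hj ↦ hz j (zero_mem_suppFace_of_nonneg fun i ↦ ?_), hz, hgen⟩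
    exact Int.cast_nonneg (hj i)
  · rintro ⟨k, -, z, -, hz, hgen⟩ u hu
    exact nonneg_of_normalCone_eq (Set.forall_mem_range.2 hz) hgen hu
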